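/- arXiv:2009.01704 — 9 statements merged into one kernel-verified Lean document; each statement's English description precedes it below -/
import Mathlib

section
/- Let 𝒳 and 𝒴 be finite types of the same cardinality K, let P_{X|Y} be a column-stochastic K×K real matrix, let P_Y be a positive probability vector on 𝒴, and set P_X = P_{X|Y} ⬝ P_Y, assumed positive. Define Q = [√P_X⁻¹] ⬝ P_{X|Y} ⬝ [√P_Y]. Then for every vector α ∈ ℝ^𝒴 one has ‖Q α‖ ≤ ‖α‖, where ‖·‖ is the Euclidean norm. (Equivalently: every singular value of Q is at most 1.) -/
open Matrix

/-- Euclidean norm of a real vector on a finite index type. -/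
noncomputable def euclNorm {I : Type*} [Fintype I] (v : I → ℝ) : ℝ :=
  Real.sqrt (∑ i, v i ^ 2)

/-- A matrix is column-stochastic if its entries are nonnegative and each column sums to 1. -/
def ColStochastic {I J : Type*} [Fintype I] (M : Matrix I J ℝ) : Prop :=
  (∀ i j, 0 ≤ M i j) ∧ ∀ j, ∑ i, M i j = 1

theorem stmt_0 {𝒳 𝒴 : Type*} [Fintype 𝒳] [Fintype 𝒴] [DecidableEq 𝒳] [DecidableEq 𝒴]
    (hcard : Fintype.card 𝒳 = Fintype.card 𝒴)
    (PXY : Matrix 𝒳 𝒴 ℝ) (hPXY : ColStochastic PXY)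
    (PY : 𝒴 → ℝ) (hPYpos : ∀ y, 0 < PY y) (hPYsum : ∑ y, PY y = 1)
    (PX : 𝒳 → ℝ) (hPX : PX = PXY.mulVec PY) (hPXpos : ∀ x, 0 < PX x)
    (Q : Matrix 𝒳 𝒴 ℝ)
    (hQ : Q = diagonal (fun x => (Real.sqrt (PX x))⁻¹) * PXY *
      diagonal (fun y => Real.sqrt (PY y)))
    (α : 𝒴 → ℝ) :
    euclNorm (Q.mulVec α) ≤ euclNorm α := by
  obtain ⟨hnn, hcol⟩ := hPXY
  unfold euclNorm
  apply Real.sqrt_le_sqrt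
  have key : ∀ x, (Q.mulVec α) x ^ 2 ≤ ∑ y, PXY x y * α y ^ 2 := by
    intro x
    have e : (Q.mulVec α) x = (Real.sqrt (PX x))⁻¹ * ∑ y, PXY x y * Real.sqrt (PY y) * α y := by
      rw [hQ, Matrix.mulVec, dotProduct, Finset.mul_sum]
      refine Finset.sum_congr rfl fun y _ => ?_
      rw [Matrix.mul_diagonal, Matrix.diagonal_mul]
      ring
    have cs : (∑ y, PXY x y * Real.sqrt (PY y) * α y) ^ 2
        ≤ (∑ y, PXY x y * PY y) * ∑ y, PXY x y * α y ^ 2 := by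
      apply Finset.sum_sq_le_sum_mul_sum_of_sq_eq_mul
      · intro y _
        exact mul_nonneg (hnn x y) (hPYpos y).le
      · intro y _
        exact mul_nonneg (hnn x y) (sq_nonneg _)
      · intro y _
        rw [mul_pow, mul_pow, Real.sq_sqrt (hPYpos y).le]
        ring
    have hx : ∑ y, PXY x y * PY y = PX x := by rw [hPX]; rfl
    rw [hx] at cs
    rw [e, mul_pow, inv_pow, Real.sq_sqrt (hPXpos x).le, inv_mul_le_iff₀ (hPXpos x)]
    exact cs
  calc ∑ x, (Q.mulVec α) x ^ 2 ≤ ∑ x, ∑ y, PXY x y * α y ^ 2 :=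
        Finset.sum_le_sum fun x _ => key x
    _ = ∑ y, α y ^ 2 := by
        rw [Finset.sum_comm]
        refine Finset.sum_congr rfl fun y _ => ?_
        rw [← Finset.sum_mul, hcol, one_mul]
end

section
/- Let 𝒳 and 𝒴 be finite types of the same cardinality K, let P_{X|Y} be an invertible column-stochastic K×K real matrix, let P_Y be a positive probability vector on 𝒴, and set P_X = P_{X|Y} ⬝ P_Y, assumed positive. Let W = [√P_Y⁻¹] ⬝ P_{X|Y}⁻¹ ⬝ [√P_X] and let √P_X denote the vector with entries √(P_X x). Then Wᵀ ⬝ W ⬝ √P_X = √P_X; in particular, √P_X is a right singular vector of W with singular value 1. -/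
open Matrix

theorem stmt_1 {𝒳 𝒴 : Type*} [Fintype 𝒳] [Fintype 𝒴] [DecidableEq 𝒳] [DecidableEq 𝒴]
    (hcard : Fintype.card 𝒳 = Fintype.card 𝒴)
    (PXY : Matrix 𝒳 𝒴 ℝ) (hPXY : ColStochastic PXY)
    (PXYinv : Matrix 𝒴 𝒳 ℝ) (hinv1 : PXY * PXYinv = 1) (hinv2 : PXYinv * PXY = 1)
    (PY : 𝒴 → ℝ) (hPYpos : ∀ y, 0 < PY y) (hPYsum : ∑ y, PY y = 1)
    (PX : 𝒳 → ℝ) (hPX : PX = PXY.mulVec PY) (hPXpos : ∀ x, 0 < PX x)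
    (W : Matrix 𝒴 𝒳 ℝ)
    (hW : W = diagonal (fun y => (Real.sqrt (PY y))⁻¹) * PXYinv *
      diagonal (fun x => Real.sqrt (PX x))) :
    (Wᵀ * W).mulVec (fun x => Real.sqrt (PX x)) = (fun x => Real.sqrt (PX x)) := by
  have h1 : diagonal (fun x => Real.sqrt (PX x)) *ᵥ (fun x => Real.sqrt (PX x)) = PX := by
    ext x
    rw [mulVec_diagonal]
    exact Real.mul_self_sqrt (hPXpos x).le
  have h2 : PXYinv *ᵥ PX = PY := by
    rw [hPX, mulVec_mulVec, hinv2, one_mulVec]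
  have h3 : diagonal (fun y => (Real.sqrt (PY y))⁻¹) *ᵥ
      (diagonal (fun y => (Real.sqrt (PY y))⁻¹) *ᵥ PY) = fun _ => 1 := by
    ext y
    rw [mulVec_diagonal, mulVec_diagonal, ← mul_assoc, ← mul_inv,
      Real.mul_self_sqrt (hPYpos y).le, inv_mul_cancel₀ (hPYpos y).ne']
  have h4 : PXYᵀ *ᵥ (fun _ => (1 : ℝ)) = fun _ => 1 := by
    ext y
    simpa [mulVec, dotProduct] using hPXY.2 y
  have h5 : PXYinvᵀ *ᵥ (fun _ => (1 : ℝ)) = fun _ => 1 := by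
    rw [← h4, mulVec_mulVec, ← transpose_mul, hinv1, transpose_one, one_mulVec]
  rw [hW, transpose_mul, transpose_mul, diagonal_transpose, diagonal_transpose]
  simp only [← mulVec_mulVec]
  rw [h1, h2, h3, h5]
  ext x
  rw [mulVec_diagonal, mul_one]
end

section
/- Assume the main setup: 𝒳, 𝒴 finite of equal cardinality K, P_{X|Y} an invertible column-stochastic matrix, P_Y a positive probability vector, P_X = P_{X|Y} ⬝ P_Y positive, and W = [√P_Y⁻¹] ⬝ P_{X|Y}⁻¹ ⬝ [√P_X]. Let 𝒰 be finite, P_U a probability vector on 𝒰, and J : 𝒰 → ℝ^𝒳 with ∑_x J_u(x) = 0 for all u, ∑_u P_U(u) • J_u = 0, and ∑_x J_u(x)²/P_X(x) ≤ 1 for all u. For ε ∈ ℝ define I_Y(ε) = ∑_u P_U(u) · ∑_y (P_Y(y) + ε·(P_{X|Y}⁻¹ ⬝ J_u)(y)) · log(1 + ε·(P_{X|Y}⁻¹ ⬝ J_u)(y)/P_Y(y)). Then the function ε ↦ I_Y(ε) − (ε²/2) · ∑_u P_U(u) · ‖W ⬝ L_u‖² is o(ε²) as ε → 0, where L_u =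 [√P_X⁻¹] ⬝ J_u. -/
open Matrix Filter Asymptotics

lemma aux_f : (fun t : ℝ => (1 + t) * Real.log (1 + t) - t - t ^ 2 / 2) =o[nhds 0] (fun t => t ^ 2) := by
  have h1 : (fun t : ℝ => (1 + t) * Real.log (1 + t) - t - t ^ 2 / 2) =O[nhds 0] (fun t => t ^ 3) := by
    refine IsBigO.of_bound 4 ?_
    filter_upwards [Metric.ball_mem_nhds (0 : ℝ) (show (0 : ℝ) < 1 / 2 by norm_num)] with t ht
    rw [Metric.mem_ball, dist_zero_right, Real.norm_eq_abs] at ht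
    have h := Real.abs_log_sub_add_sum_range_le (x := -t) (by rw [abs_neg]; linarith) 2
    simp only [Finset.sum_range_succ, Finset.sum_range_zero, abs_neg, sub_neg_eq_add] at h
    norm_num at h
    have hR : |-t + t ^ 2 / 2 + Real.log (1 + t)| ≤ 2 * |t| ^ 3 := by
      refine h.trans ?_
      rw [div_le_iff₀ (by linarith)]
      have : 0 ≤ |t| ^ 3 := by positivity
      nlinarith
    have e : (1 + t) * Real.log (1 + t) - t - t ^ 2 / 2
        = (1 + t) * (-t + t ^ 2 / 2 + Real.log (1 + t)) - t ^ 3 / 2 := by ring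
    rw [e, Real.norm_eq_abs, Real.norm_eq_abs]
    have h3 : |t ^ 3| = |t| ^ 3 := abs_pow t 3
    have h0 : 0 ≤ |t| ^ 3 := by positivity
    have h1t : |1 + t| ≤ 3 / 2 := by
      rw [abs_lt] at ht
      rw [abs_le]; constructor <;> linarith
    calc _ ≤ |(1 + t) * (-t + t ^ 2 / 2 + Real.log (1 + t))| + |t ^ 3 / 2| := abs_sub _ _
      _ ≤ 3 / 2 * (2 * |t| ^ 3) + |t| ^ 3 / 2 := by
        rw [abs_mul, abs_div, h3, abs_two]
        gcongr
      _ ≤ _ := by rw [h3]; linarith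
  exact h1.trans_isLittleO (isLittleO_pow_pow (by norm_num))

lemma aux_g (a : ℝ) : (fun ε : ℝ => (1 + ε * a) * Real.log (1 + ε * a) - ε * a - (ε * a) ^ 2 / 2)
    =o[nhds 0] (fun ε => ε ^ 2) := by
  have ht : Tendsto (fun ε : ℝ => ε * a) (nhds 0) (nhds 0) := by
    have : Continuous (fun ε : ℝ => ε * a) := by fun_prop
    simpa using this.tendsto 0
  refine (aux_f.comp_tendsto ht).trans_isBigO ?_
  refine IsBigO.of_bound (a ^ 2) (Eventually.of_forall fun ε => ?_)
  simp [mul_pow, mul_comm]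

theorem stmt_7 {𝒳 𝒴 𝒰 : Type*} [Fintype 𝒳] [Fintype 𝒴] [Fintype 𝒰]
    [DecidableEq 𝒳] [DecidableEq 𝒴]
    (hcard : Fintype.card 𝒳 = Fintype.card 𝒴)
    (PXY : Matrix 𝒳 𝒴 ℝ) (hPXY : ColStochastic PXY)
    (PXYinv : Matrix 𝒴 𝒳 ℝ) (hinv1 : PXY * PXYinv = 1) (hinv2 : PXYinv * PXY = 1)
    (PY : 𝒴 → ℝ) (hPYpos : ∀ y, 0 < PY y) (hPYsum : ∑ y, PY y = 1)
    (PX : 𝒳 → ℝ) (hPX : PX = PXY.mulVec PY) (hPXpos : ∀ x, 0 < PX x)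
    (W : Matrix 𝒴 𝒳 ℝ)
    (hW : W = diagonal (fun y => (Real.sqrt (PY y))⁻¹) * PXYinv *
      diagonal (fun x => Real.sqrt (PX x)))
    (PU : 𝒰 → ℝ) (hPUnn : ∀ u, 0 ≤ PU u) (hPUsum : ∑ u, PU u = 1)
    (J : 𝒰 → 𝒳 → ℝ)
    (hJ1 : ∀ u, ∑ x, J u x = 0)
    (hJ2 : ∑ u, PU u • J u = 0)
    (hJ3 : ∀ u, ∑ x, J u x ^ 2 / PX x ≤ 1)
    (IY : ℝ → ℝ)
    (hIY : ∀ ε, IY ε =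
      ∑ u, PU u * ∑ y, (PY y + ε * PXYinv.mulVec (J u) y) *
        Real.log (1 + ε * PXYinv.mulVec (J u) y / PY y))
    (L : 𝒰 → 𝒳 → ℝ)
    (hL : ∀ u, L u = (diagonal fun x => (Real.sqrt (PX x))⁻¹).mulVec (J u)) :
    (fun ε => IY ε - ε ^ 2 / 2 * ∑ u, PU u * euclNorm (W.mulVec (L u)) ^ 2)
      =o[nhds 0] (fun ε => ε ^ 2) := by
  have hcol : ∀ x, ∑ y, PXYinv y x = 1 := by
    intro x
    have h : ∑ x', (PXY * PXYinv) x' x = 1 := by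
      rw [hinv1]; simp [Matrix.one_apply]
    simp only [Matrix.mul_apply] at h
    rw [Finset.sum_comm] at h
    simpa [← Finset.sum_mul, hPXY.2] using h
  have hv : ∀ u, ∑ y, PXYinv.mulVec (J u) y = 0 := by
    intro u
    simp only [Matrix.mulVec, dotProduct]
    rw [Finset.sum_comm]
    simp [← Finset.sum_mul, hcol, hJ1]
  have hWL : ∀ u, W.mulVec (L u) = fun y => (Real.sqrt (PY y))⁻¹ * PXYinv.mulVec (J u) y := by
    intro u
    have hd : (diagonal (fun x => Real.sqrt (PX x))).mulVec (L u) = J u := by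
      ext x
      rw [hL, mulVec_diagonal, mulVec_diagonal,
        mul_inv_cancel_left₀ (Real.sqrt_pos.2 (hPXpos x)).ne']
    ext y
    rw [hW, ← Matrix.mulVec_mulVec, hd, ← Matrix.mulVec_mulVec, mulVec_diagonal]
  have hN : ∀ u, euclNorm (W.mulVec (L u)) ^ 2 = ∑ y, (PXYinv.mulVec (J u) y) ^ 2 / PY y := by
    intro u
    rw [euclNorm, Real.sq_sqrt (Finset.sum_nonneg fun _ _ => sq_nonneg _), hWL]
    refine Finset.sum_congr rfl fun y _ => ?_
    rw [mul_pow, inv_pow, Real.sq_sqrt (hPYpos y).le]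
    ring
  have key : (fun ε => IY ε - ε ^ 2 / 2 * ∑ u, PU u * euclNorm (W.mulVec (L u)) ^ 2) =
      fun ε => ∑ u, PU u * ∑ y, PY y * ((1 + ε * (PXYinv.mulVec (J u) y / PY y)) *
        Real.log (1 + ε * (PXYinv.mulVec (J u) y / PY y)) - ε * (PXYinv.mulVec (J u) y / PY y)
          - (ε * (PXYinv.mulVec (J u) y / PY y)) ^ 2 / 2) := by
    ext ε
    rw [hIY, Finset.mul_sum, ← Finset.sum_sub_distrib]
    refine Finset.sum_congr rfl fun u _ => ?_
    rw [hN, mul_left_comm, ← mul_sub]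
    congr 1
    have h0 : ∑ y, ε * PXYinv.mulVec (J u) y = 0 := by rw [← Finset.mul_sum, hv, mul_zero]
    rw [← sub_zero (_ - _), ← h0, Finset.mul_sum, ← Finset.sum_sub_distrib,
      ← Finset.sum_sub_distrib]
    refine Finset.sum_congr rfl fun y _ => ?_
    have := (hPYpos y).ne'
    rw [mul_div_assoc]
    generalize Real.log _ = l
    field_simp
    ring
  rw [key]
  exact IsLittleO.fun_sum fun u _ => (IsLittleO.fun_sum fun y _ =>
    (aux_g _).const_mul_left _).const_mul_left _
end

section
/- Assume the main setup: 𝒳, 𝒴 finite of equal cardinality K, P_{X|Y} an invertible column-stochastic matrix, P_Y a positive probability vector, P_X = P_{X|Y} ⬝ P_Y positive. Let 𝒰 be finite, P_U a probability vector on 𝒰, and for each u with P_U(u) > 0 let P_{Y|U=u} be a probability vector on 𝒴 with ∑_u P_U(u) • P_{Y|U=u} = P_Y, and set P_{X|U=u} = P_{X|Y} ⬝ P_{Y|U=u} (the Markov chain X−Y−U). Then ∑_{u} P_U(u) · ‖[√P_Y⁻¹] ⬝ P_{X|Y}⁻¹ ⬝ (P_{X|U=u} − P_X)‖² = ∑_{u}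 P_U(u) · χ²(P_{Y|U=u} ‖ P_Y), i.e. the weighted squared-norm objective equals the χ²-information between Y and U. -/
open Matrix

theorem stmt_8 {𝒳 𝒴 𝒰 : Type*} [Fintype 𝒳] [Fintype 𝒴] [Fintype 𝒰]
    [DecidableEq 𝒳] [DecidableEq 𝒴]
    (hcard : Fintype.card 𝒳 = Fintype.card 𝒴)
    (PXY : Matrix 𝒳 𝒴 ℝ) (hPXY : ColStochastic PXY)
    (PXYinv : Matrix 𝒴 𝒳 ℝ) (hinv1 : PXY * PXYinv = 1) (hinv2 : PXYinv * PXY = 1)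
    (PY : 𝒴 → ℝ) (hPYpos : ∀ y, 0 < PY y) (hPYsum : ∑ y, PY y = 1)
    (PX : 𝒳 → ℝ) (hPX : PX = PXY.mulVec PY) (hPXpos : ∀ x, 0 < PX x)
    (PU : 𝒰 → ℝ) (hPUnn : ∀ u, 0 ≤ PU u) (hPUsum : ∑ u, PU u = 1)
    (PYgU : 𝒰 → 𝒴 → ℝ)
    (hPYgUprob : ∀ u, 0 < PU u → (∀ y, 0 ≤ PYgU u y) ∧ ∑ y, PYgU u y = 1)
    (hmix : ∑ u, PU u • PYgU u = PY)
    (PXgU : 𝒰 → 𝒳 → ℝ) (hPXgU : ∀ u, PXgU u = PXY.mulVec (PYgU u)) :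
    ∑ u, PU u *
        euclNorm ((diagonal (fun y => (Real.sqrt (PY y))⁻¹) * PXYinv).mulVec
          (fun x => PXgU u x - PX x)) ^ 2
      = ∑ u, PU u * ∑ y, (PYgU u y - PY y) ^ 2 / PY y := by
  refine Finset.sum_congr rfl fun u _ => ?_
  congr 1
  have h : (fun x => PXgU u x - PX x) = PXY.mulVec (PYgU u - PY) := by
    rw [Matrix.mulVec_sub, ← hPXgU, ← hPX]; rfl
  rw [h, Matrix.mulVec_mulVec, Matrix.mul_assoc, hinv2, Matrix.mul_one]
  unfold euclNorm
  rw [Real.sq_sqrt (Finset.sum_nonneg fun i _ => sq_nonneg _)]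
  refine Finset.sum_congr rfl fun y _ => ?_
  rw [Matrix.mulVec_diagonal, mul_pow, inv_pow, Real.sq_sqrt (hPYpos y).le, Pi.sub_apply]
  rw [div_eq_mul_inv, mul_comm]
end

section
/- Let 𝒳, 𝒰, 𝒰' be finite types and let p be a joint probability mass function on 𝒳 × 𝒰 × 𝒰' satisfying the Markov chain X − U − U', i.e. p(x,u,u') · P_U(u) = P_{XU}(x,u) · P_{UU'}(u,u') for all x, u, u', where P_U, P_{XU}, P_{UU'} are the corresponding marginals. Assume the marginal P_X is positive. Then χ²-information is non-increasing under this post-processing: ∑_{u' : P_{U'}(u')>0} P_{U'}(u') · χ²(P_{X|U'=u'} ‖ P_X) ≤ ∑_{u : P_U(u)>0} P_U(u) · χ²(P_{X|U=u} ‖ P_X), where P_{X|U=u}(x) = P_{XU}(x,u)/P_U(u) and P_{X|U'=u'}(x) = P_{XU'}(x,u')/P_{U'}(u'). -/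
theorem stmt_10 {𝒳 𝒰 𝒱 : Type*} [Fintype 𝒳] [Fintype 𝒰] [Fintype 𝒱]
    -- 𝒱 plays the role of 𝒰'
    (p : 𝒳 → 𝒰 → 𝒱 → ℝ) (hpnn : ∀ x u u', 0 ≤ p x u u')
    (hpsum : ∑ x, ∑ u, ∑ u', p x u u' = 1)
    (PU : 𝒰 → ℝ) (hPU : ∀ u, PU u = ∑ x, ∑ u', p x u u')
    (PXU : 𝒳 → 𝒰 → ℝ) (hPXU : ∀ x u, PXU x u = ∑ u', p x u u')
    (PUU' : 𝒰 → 𝒱 → ℝ) (hPUU' : ∀ u u', PUU' u u' = ∑ x, p x u u')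
    (PX : 𝒳 → ℝ) (hPX : ∀ x, PX x = ∑ u, ∑ u', p x u u') (hPXpos : ∀ x, 0 < PX x)
    (PU' : 𝒱 → ℝ) (hPU' : ∀ u', PU' u' = ∑ x, ∑ u, p x u u')
    (PXU' : 𝒳 → 𝒱 → ℝ) (hPXU' : ∀ x u', PXU' x u' = ∑ u, p x u u')
    (hmarkov : ∀ x u u', p x u u' * PU u = PXU x u * PUU' u u') :
    ∑ u' ∈ Finset.univ.filter (fun u' => 0 < PU' u'),
        PU' u' * ∑ x, (PXU' x u' / PU' u' - PX x) ^ 2 / PX x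
      ≤ ∑ u ∈ Finset.univ.filter (fun u => 0 < PU u),
          PU u * ∑ x, (PXU x u / PU u - PX x) ^ 2 / PX x := by
  have hPU0 : ∀ u, 0 ≤ PU u := fun u => by
    rw [hPU]; exact Finset.sum_nonneg fun x _ => Finset.sum_nonneg fun v _ => hpnn x u v
  have hPV0 : ∀ v, 0 ≤ PU' v := fun v => by
    rw [hPU']; exact Finset.sum_nonneg fun x _ => Finset.sum_nonneg fun u _ => hpnn x u v
  have hw0 : ∀ u v, 0 ≤ PUU' u v := fun u v => by
    rw [hPUU']; exact Finset.sum_nonneg fun x _ => hpnn x u v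
  have hwU : ∀ u, ∑ v, PUU' u v = PU u := fun u => by
    simp only [hPUU', hPU]; exact Finset.sum_comm
  have hwV : ∀ v, ∑ u, PUU' u v = PU' v := fun v => by
    simp only [hPUU', hPU']; exact Finset.sum_comm
  have hpw : ∀ x u v, p x u v = PUU' u v * (PXU x u / PU u) := by
    intro x u v
    rcases eq_or_ne (PU u) 0 with h | h
    · have h1 : PUU' u v = 0 :=
        (Finset.sum_eq_zero_iff_of_nonneg (fun v _ => hw0 u v)).1 ((hwU u).trans h) v
          (Finset.mem_univ _)
      have h2 : p x u v = 0 :=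
        (Finset.sum_eq_zero_iff_of_nonneg (fun x _ => hpnn x u v)).1 ((hPUU' u v).symm.trans h1) x
          (Finset.mem_univ _)
      rw [h1, h2, zero_mul]
    · field_simp
      linarith [hmarkov x u v]
  rw [Finset.sum_filter_of_ne, Finset.sum_filter_of_ne]
  rotate_left
  · intro u _ h
    exact lt_of_le_of_ne (hPU0 u) (fun h0 => h (by rw [← h0, zero_mul]))
  · intro u _ h
    exact lt_of_le_of_ne (hPV0 u) (fun h0 => h (by rw [← h0, zero_mul]))
  simp only [Finset.mul_sum]
  rw [Finset.sum_comm, Finset.sum_comm (s := (Finset.univ : Finset 𝒰))]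
  refine Finset.sum_le_sum fun x _ => ?_
  simp only [← mul_div_assoc, ← Finset.sum_div]
  refine div_le_div_of_nonneg_right ?_ (hPXpos x).le
  have key : ∀ v, PU' v * (PXU' x v / PU' v - PX x) ^ 2
      ≤ ∑ u, PUU' u v * (PXU x u / PU u - PX x) ^ 2 := by
    intro v
    have hE : ∑ u, PUU' u v * (PXU x u / PU u - PX x)
        = PU' v * (PXU' x v / PU' v - PX x) := by
      have h1 : PU' v * (PXU' x v / PU' v) = PXU' x v := by
        rcases eq_or_ne (PU' v) 0 with h | h
        · have : PXU' x v = 0 := by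
            rw [hPU'] at h
            rw [hPXU']
            exact (Finset.sum_eq_zero_iff_of_nonneg
              (fun x _ => Finset.sum_nonneg fun u _ => hpnn x u v)).1 h x (Finset.mem_univ _)
          rw [this, h, zero_mul]
        · field_simp
      rw [mul_sub, h1, hPXU', ← hwV, Finset.sum_mul, ← Finset.sum_sub_distrib]
      refine Finset.sum_congr rfl fun u _ => ?_
      rw [hpw x u v, mul_sub]
    set e := PXU' x v / PU' v - PX x with he
    have h0 : 0 ≤ ∑ u, PUU' u v * ((PXU x u / PU u - PX x) - e) ^ 2 :=
      Finset.sum_nonneg fun u _ => mul_nonneg (hw0 u v) (sq_nonneg _)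
    have h2 : ∑ u, PUU' u v * ((PXU x u / PU u - PX x) - e) ^ 2
        = ∑ u, PUU' u v * (PXU x u / PU u - PX x) ^ 2
          - 2 * e * ∑ u, PUU' u v * (PXU x u / PU u - PX x) + e ^ 2 * ∑ u, PUU' u v := by
      rw [Finset.mul_sum, Finset.mul_sum, ← Finset.sum_sub_distrib, ← Finset.sum_add_distrib]
      exact Finset.sum_congr rfl fun u _ => by ring
    rw [h2, hE, hwV] at h0
    linarith
  refine (Finset.sum_le_sum fun v _ => key v).trans (le_of_eq ?_)
  rw [Finset.sum_comm]
  refine Finset.sum_congr rfl fun u _ => ?_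
  rw [← Finset.sum_mul, hwU]
end

section
/- Let a, c be real numbers with (a ≥ 1 and c ≤ 0) or (a ≤ 0 and c ≥ 1), and let p ∈ [0,1]. Set s = (a − c)·p + c. Then: (i) if s ≥ 1/2, then (c − a)²·p·(1 − p) ≤ 4·(c − 1/2)·(1/2 − a)·s²; (ii) if s ≤ 1/2, then (c − a)²·p·(1 − p) ≤ 4·(c − 1/2)·(1/2 − a)·(1 − s)². Moreover, for p = (1/2 − c)/(a − c) one has s = 1/2 and equality (c − a)²·p·(1 − p) = 4·(c − 1/2)·(1/2 − a)·s² in (i). -/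
theorem stmt_14 (a c p : ℝ) (h : (1 ≤ a ∧ c ≤ 0) ∨ (a ≤ 0 ∧ 1 ≤ c))
    (hp0 : 0 ≤ p) (hp1 : p ≤ 1) (s : ℝ) (hs : s = (a - c) * p + c) :
    ((1/2 ≤ s → (c - a) ^ 2 * p * (1 - p) ≤ 4 * (c - 1/2) * (1/2 - a) * s ^ 2) ∧
     (s ≤ 1/2 → (c - a) ^ 2 * p * (1 - p) ≤ 4 * (c - 1/2) * (1/2 - a) * (1 - s) ^ 2)) ∧
    (p = (1/2 - c) / (a - c) →
      s = 1/2 ∧ (c - a) ^ 2 * p * (1 - p) = 4 * (c - 1/2) * (1/2 - a) * s ^ 2) := by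
  have e : (c - a) ^ 2 * p * (1 - p) = (s - c) * (a - s) := by rw [hs]; ring
  have hac : a - c ≠ 0 := by
    rcases h with ⟨h1, h2⟩ | ⟨h1, h2⟩ <;> intro h0 <;> linarith
  have k1 : (a - 1/2) - (1/2 - c) ≤ 4 * ((a - 1/2) * (1/2 - c)) := by
    rcases h with ⟨h1, h2⟩ | ⟨h1, h2⟩ <;> nlinarith
  have k2 : (1/2 - c) - (a - 1/2) ≤ 4 * ((a - 1/2) * (1/2 - c)) := by
    rcases h with ⟨h1, h2⟩ | ⟨h1, h2⟩ <;> nlinarith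
  have k3 : 0 ≤ (a - 1/2) * (1/2 - c) := by linarith
  have k4 := mul_nonneg k3 (sq_nonneg (s - 1/2))
  have k5 := sq_nonneg (s - 1/2)
  rw [e]
  refine ⟨⟨fun h1 => ?_, fun h1 => ?_⟩, fun h1 => ?_⟩
  · have := mul_nonneg (sub_nonneg.2 h1) (sub_nonneg.2 k1)
    linarith
  · have := mul_nonneg (sub_nonneg.2 h1) (sub_nonneg.2 k2)
    linarith
  · have h2 : s = 1/2 := by rw [hs, h1]; field_simp; ring
    refine ⟨h2, ?_⟩
    rw [h2]; ring
end

section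
/- Let 𝒳, 𝒴, 𝒵 be finite types with |𝒳| = |𝒵| = K. Let P_{Y|X} be a column-stochastic matrix from 𝒳 to 𝒴, let P_{Z|X} be an invertible column-stochastic K×K matrix, and let P_X be a positive probability vector on 𝒳 with P_Y = P_{Y|X} ⬝ P_X and P_Z = P_{Z|X} ⬝ P_X both positive. Define W₁ = [√P_Y⁻¹] ⬝ P_{Y|X} ⬝ [√P_X] and W₂ = [√P_X⁻¹] ⬝ P_{Z|X}⁻¹ ⬝ [√P_Z]. Then (W₁ ⬝ W₂)ᵀ ⬝ (W₁ ⬝ W₂) ⬝ √P_Z = √P_Z; in particular, 1 is a singular value of W₁ ⬝ W₂ with corresponding right singular vector √P_Z. -/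
open Matrix

theorem stmt_15 {𝒳 𝒴 𝒵 : Type*} [Fintype 𝒳] [Fintype 𝒴] [Fintype 𝒵]
    [DecidableEq 𝒳] [DecidableEq 𝒴] [DecidableEq 𝒵]
    (hcard : Fintype.card 𝒳 = Fintype.card 𝒵)
    (PYX : Matrix 𝒴 𝒳 ℝ) (hPYX : ColStochastic PYX)
    (PZX : Matrix 𝒵 𝒳 ℝ) (hPZX : ColStochastic PZX)
    (PZXinv : Matrix 𝒳 𝒵 ℝ) (hinv1 : PZX * PZXinv = 1) (hinv2 : PZXinv * PZX = 1)
    (PX : 𝒳 → ℝ) (hPXpos : ∀ x, 0 < PX x) (hPXsum : ∑ x, PX x = 1)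
    (PY : 𝒴 → ℝ) (hPY : PY = PYX.mulVec PX) (hPYpos : ∀ y, 0 < PY y)
    (PZ : 𝒵 → ℝ) (hPZ : PZ = PZX.mulVec PX) (hPZpos : ∀ z, 0 < PZ z)
    (W₁ : Matrix 𝒴 𝒳 ℝ)
    (hW₁ : W₁ = diagonal (fun y => (Real.sqrt (PY y))⁻¹) * PYX *
      diagonal (fun x => Real.sqrt (PX x)))
    (W₂ : Matrix 𝒳 𝒵 ℝ)
    (hW₂ : W₂ = diagonal (fun x => (Real.sqrt (PX x))⁻¹) * PZXinv *
      diagonal (fun z => Real.sqrt (PZ z))) :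
    ((W₁ * W₂)ᵀ * (W₁ * W₂)).mulVec (fun z => Real.sqrt (PZ z))
      = fun z => Real.sqrt (PZ z) := by
  have sX : ∀ x, Real.sqrt (PX x) ≠ 0 := fun x => (Real.sqrt_pos.2 (hPXpos x)).ne'
  have sY : ∀ x, Real.sqrt (PY x) ≠ 0 := fun x => (Real.sqrt_pos.2 (hPYpos x)).ne'
  have hZX : PZXinv.mulVec PZ = PX := by
    rw [hPZ, mulVec_mulVec, hinv2, one_mulVec]
  have hone : PYXᵀ.mulVec (fun _ => (1 : ℝ)) = fun _ => 1 := by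
    funext x
    simpa [mulVec, dotProduct] using hPYX.2 x
  have honeZ : PZXᵀ.mulVec (fun _ => (1 : ℝ)) = fun _ => 1 := by
    funext x
    simpa [mulVec, dotProduct] using hPZX.2 x
  have honeI : PZXinvᵀ.mulVec (fun _ => (1 : ℝ)) = fun _ => 1 := by
    rw [← honeZ, mulVec_mulVec, ← transpose_mul, hinv1, transpose_one, one_mulVec]
  have dX : (diagonal (fun x => Real.sqrt (PX x))).mulVec (fun x => Real.sqrt (PX x)) = PX := by
    funext x
    rw [mulVec_diagonal, Real.mul_self_sqrt (hPXpos x).le]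
  have dZ : (diagonal (fun x => Real.sqrt (PZ x))).mulVec (fun x => Real.sqrt (PZ x)) = PZ := by
    funext x
    rw [mulVec_diagonal, Real.mul_self_sqrt (hPZpos x).le]
  have h1 : W₂.mulVec (fun z => Real.sqrt (PZ z)) = fun x => Real.sqrt (PX x) := by
    rw [hW₂, ← mulVec_mulVec, dZ, ← mulVec_mulVec, hZX]
    funext x
    rw [mulVec_diagonal, inv_mul_eq_div, Real.div_sqrt]
  have h2 : W₁.mulVec (fun x => Real.sqrt (PX x)) = fun y => Real.sqrt (PY y) := by
    rw [hW₁, ← mulVec_mulVec, dX, ← mulVec_mulVec, ← hPY]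
    funext x
    rw [mulVec_diagonal, inv_mul_eq_div, Real.div_sqrt]
  have eY : (diagonal (fun y => (Real.sqrt (PY y))⁻¹)).mulVec (fun y => Real.sqrt (PY y))
      = fun _ => 1 := by
    funext y
    rw [mulVec_diagonal, inv_mul_cancel₀ (sY y)]
  have eX : (diagonal (fun y => (Real.sqrt (PX y))⁻¹)).mulVec (fun y => Real.sqrt (PX y))
      = fun _ => 1 := by
    funext y
    rw [mulVec_diagonal, inv_mul_cancel₀ (sX y)]
  have h3 : W₁ᵀ.mulVec (fun y => Real.sqrt (PY y)) = fun x => Real.sqrt (PX x) := by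
    rw [hW₁, transpose_mul, transpose_mul, diagonal_transpose, diagonal_transpose,
      ← mulVec_mulVec, ← mulVec_mulVec, eY, hone]
    funext x
    rw [mulVec_diagonal, mul_one]
  have h4 : W₂ᵀ.mulVec (fun x => Real.sqrt (PX x)) = fun z => Real.sqrt (PZ z) := by
    rw [hW₂, transpose_mul, transpose_mul, diagonal_transpose, diagonal_transpose,
      ← mulVec_mulVec, ← mulVec_mulVec, eX, honeI]
    funext x
    rw [mulVec_diagonal, mul_one]
  rw [transpose_mul, ← mulVec_mulVec, ← mulVec_mulVec, ← mulVec_mulVec, h1, h2, h3, h4]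
end

section
/- Let 𝒳, 𝒴, 𝒵 be finite types with |𝒳| = |𝒵| = K, P_{Y|X} column-stochastic, P_{Z|X} invertible column-stochastic, P_X a positive probability vector with P_Y = P_{Y|X} ⬝ P_X and P_Z = P_{Z|X} ⬝ P_X positive; set W₁ = [√P_Y⁻¹] ⬝ P_{Y|X} ⬝ [√P_X] and W₂ = [√P_X⁻¹] ⬝ P_{Z|X}⁻¹ ⬝ [√P_Z]. If the operator norm satisfies ‖W₁ ⬝ W₂‖ > 1, then the set { ‖W₁ ⬝ W₂ ⬝ L‖² : L ∈ ℝ^𝒵, ‖L‖ ≤ 1, ⟨L, √P_Z⟩ = 0 } has greatest element ‖W₁ ⬝ W₂‖²; i.e., the maximum of the constrained problem equals the squared largest singular value of W₁ ⬝ W₂ and is attained by a unit vector orthogonal to √P_Z. -/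
open Matrix

/-- The ℓ²-operator norm (largest singular value) of a real matrix. -/
noncomputable def matOpNorm {I J : Type*} [Fintype I] [Fintype J] (M : Matrix I J ℝ) : ℝ :=
  sSup {r : ℝ | ∃ v : J → ℝ, euclNorm v ≤ 1 ∧ r = euclNorm (M.mulVec v)}

theorem euclNorm_sq' {I : Type*} [Fintype I] (v : I → ℝ) : euclNorm v ^ 2 = v ⬝ᵥ v := by
  unfold euclNorm
  rw [Real.sq_sqrt (Finset.sum_nonneg fun i _ => sq_nonneg _)]
  simp [dotProduct, sq]

theorem euclNorm_nonneg' {I : Type*} [Fintype I] (v : I → ℝ) : 0 ≤ euclNorm v :=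
  Real.sqrt_nonneg _

theorem euclNorm_smul' {I : Type*} [Fintype I] (c : ℝ) (v : I → ℝ) :
    euclNorm (c • v) = |c| * euclNorm v := by
  unfold euclNorm
  have : ∑ i, (c • v) i ^ 2 = c ^ 2 * ∑ i, v i ^ 2 := by
    simp [mul_pow, Finset.mul_sum]
  rw [this, Real.sqrt_mul (sq_nonneg c), Real.sqrt_sq_eq_abs]

theorem euclNorm_continuous' {I : Type*} [Fintype I] :
    Continuous (euclNorm : (I → ℝ) → ℝ) := by
  unfold euclNorm
  fun_prop

theorem isCompact_ball' (I : Type*) [Fintype I] :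
    IsCompact {v : I → ℝ | euclNorm v ≤ 1} := by
  refine (isCompact_univ_pi (fun _ : I => isCompact_Icc (a := (-1 : ℝ)) (b := 1))).of_isClosed_subset
    (isClosed_le euclNorm_continuous' continuous_const) ?_
  intro v hv i _
  have h1 : euclNorm v ≤ 1 := hv
  have h2 : v i ^ 2 ≤ euclNorm v ^ 2 := by
    rw [euclNorm_sq', dotProduct, sq]
    exact Finset.single_le_sum (f := fun j => v j * v j)
      (fun j _ => mul_self_nonneg (v j)) (Finset.mem_univ i)
  have h0 := euclNorm_nonneg' v
  have h3 : v i ^ 2 ≤ 1 := by nlinarith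
  exact ⟨by nlinarith, by nlinarith⟩

theorem matOpNorm_greatest' {I J : Type*} [Fintype I] [Fintype J] (M : Matrix I J ℝ) :
    IsGreatest {r : ℝ | ∃ v : J → ℝ, euclNorm v ≤ 1 ∧ r = euclNorm (M.mulVec v)}
      (matOpNorm M) := by
  have h : {r : ℝ | ∃ v : J → ℝ, euclNorm v ≤ 1 ∧ r = euclNorm (M.mulVec v)}
      = (fun v => euclNorm (M.mulVec v)) '' {v : J → ℝ | euclNorm v ≤ 1} := by
    ext r
    simp [eq_comm]
  unfold matOpNorm
  rw [h]
  refine IsCompact.isGreatest_sSup ?_ ⟨_, 0, ?_, rfl⟩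
  · refine (isCompact_ball' J).image ?_
    exact euclNorm_continuous'.comp (continuous_const.matrix_mulVec continuous_id)
  · simp [euclNorm]

theorem matOpNorm_bound' {I J : Type*} [Fintype I] [Fintype J] (M : Matrix I J ℝ) (w : J → ℝ) :
    euclNorm (M.mulVec w) ≤ matOpNorm M * euclNorm w := by
  rcases (euclNorm_nonneg' w).eq_or_lt with h | h
  · have hw : w = 0 := by
      apply dotProduct_self_eq_zero.1
      rw [← euclNorm_sq', ← h]; simp
    subst hw
    simp [euclNorm]
  · have := (matOpNorm_greatest' M).2 ⟨(euclNorm w)⁻¹ • w, by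
      rw [euclNorm_smul', abs_of_pos (inv_pos.2 h), inv_mul_cancel₀ h.ne'], rfl⟩
    rw [mulVec_smul, euclNorm_smul', abs_of_pos (inv_pos.2 h), inv_mul_le_iff₀ h] at this
    linarith

theorem core' {I J : Type*} [Fintype I] [Fintype J] (M : Matrix I J ℝ) (s : J → ℝ) (t : I → ℝ)
    (h1 : M *ᵥ s = t) (h2 : t ᵥ* M = s) (hs : s ⬝ᵥ s = 1) (hgt : 1 < matOpNorm M)
    (v : J → ℝ) (hv : euclNorm v ≤ 1) (hm : matOpNorm M = euclNorm (M *ᵥ v)) :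
    v ⬝ᵥ s = 0 := by
  set c := v ⬝ᵥ s with hc
  have e1 : s ⬝ᵥ v = c := dotProduct_comm _ _
  have ht : t ⬝ᵥ t = 1 := by
    nth_rw 2 [← h1]
    rw [dotProduct_mulVec, h2, hs]
  have htv : t ⬝ᵥ (M *ᵥ v) = c := by rw [dotProduct_mulVec, h2, e1]
  have hvt : (M *ᵥ v) ⬝ᵥ t = c := by rw [dotProduct_comm, htv]
  have hb := matOpNorm_bound' M (v - c • s)
  have hb2 := pow_le_pow_left₀ (euclNorm_nonneg' _) hb 2
  rw [mul_pow, euclNorm_sq', euclNorm_sq', mulVec_sub, mulVec_smul, h1] at hb2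
  simp only [sub_dotProduct, dotProduct_sub, smul_dotProduct, dotProduct_smul, smul_eq_mul,
    ht, htv, hvt, hs, e1, ← hc] at hb2
  rw [← euclNorm_sq', ← euclNorm_sq', ← hm] at hb2
  have h0 := euclNorm_nonneg' v
  have hv2 : euclNorm v ^ 2 ≤ 1 := by nlinarith
  have hσ : 1 < matOpNorm M ^ 2 := by nlinarith
  have h5 : matOpNorm M ^ 2 * euclNorm v ^ 2 ≤ matOpNorm M ^ 2 :=
    mul_le_of_le_one_right (by positivity) hv2
  have h6 : c ^ 2 * (matOpNorm M ^ 2 - 1) ≤ 0 := by nlinarith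
  have h7 : c ^ 2 ≤ 0 := by
    by_contra h
    push Not at h
    nlinarith [mul_pos h (sub_pos.2 hσ)]
  exact pow_eq_zero_iff (two_ne_zero) |>.1 (le_antisymm h7 (sq_nonneg c))

theorem stmt_16 {𝒳 𝒴 𝒵 : Type*} [Fintype 𝒳] [Fintype 𝒴] [Fintype 𝒵]
    [DecidableEq 𝒳] [DecidableEq 𝒴] [DecidableEq 𝒵]
    (hcard : Fintype.card 𝒳 = Fintype.card 𝒵)
    (PYX : Matrix 𝒴 𝒳 ℝ) (hPYX : ColStochastic PYX)
    (PZX : Matrix 𝒵 𝒳 ℝ) (hPZX : ColStochastic PZX)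
    (PZXinv : Matrix 𝒳 𝒵 ℝ) (hinv1 : PZX * PZXinv = 1) (hinv2 : PZXinv * PZX = 1)
    (PX : 𝒳 → ℝ) (hPXpos : ∀ x, 0 < PX x) (hPXsum : ∑ x, PX x = 1)
    (PY : 𝒴 → ℝ) (hPY : PY = PYX.mulVec PX) (hPYpos : ∀ y, 0 < PY y)
    (PZ : 𝒵 → ℝ) (hPZ : PZ = PZX.mulVec PX) (hPZpos : ∀ z, 0 < PZ z)
    (W₁ : Matrix 𝒴 𝒳 ℝ)
    (hW₁ : W₁ = diagonal (fun y => (Real.sqrt (PY y))⁻¹) * PYX *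
      diagonal (fun x => Real.sqrt (PX x)))
    (W₂ : Matrix 𝒳 𝒵 ℝ)
    (hW₂ : W₂ = diagonal (fun x => (Real.sqrt (PX x))⁻¹) * PZXinv *
      diagonal (fun z => Real.sqrt (PZ z)))
    (hgt : 1 < matOpNorm (W₁ * W₂)) :
    IsGreatest
      {r : ℝ | ∃ L : 𝒵 → ℝ, euclNorm L ≤ 1 ∧ (∑ z, L z * Real.sqrt (PZ z)) = 0 ∧
        r = euclNorm ((W₁ * W₂).mulVec L) ^ 2}
      (matOpNorm (W₁ * W₂) ^ 2) := by
  have hsY : ∀ y, Real.sqrt (PY y) ≠ 0 := fun y => (Real.sqrt_pos.2 (hPYpos y)).ne'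
  have hsX : ∀ y, Real.sqrt (PX y) ≠ 0 := fun y => (Real.sqrt_pos.2 (hPXpos y)).ne'
  have hXinv : PZXinv *ᵥ PZ = PX := by rw [hPZ, mulVec_mulVec, hinv2, one_mulVec]
  have oneYX : (fun _ => (1 : ℝ)) ᵥ* PYX = fun _ => 1 := by
    ext x; simpa [vecMul, dotProduct] using hPYX.2 x
  have oneZX : (fun _ => (1 : ℝ)) ᵥ* PZX = fun _ => 1 := by
    ext x; simpa [vecMul, dotProduct] using hPZX.2 x
  have oneInv : (fun _ => (1 : ℝ)) ᵥ* PZXinv = fun _ => 1 := by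
    rw [← oneZX, vecMul_vecMul, hinv1, vecMul_one]
  have hZsum : ∑ z, PZ z = 1 := by
    have : (fun _ => (1 : ℝ)) ⬝ᵥ PZ = 1 := by
      rw [hPZ, dotProduct_mulVec, oneZX]; simpa [dotProduct] using hPXsum
    simpa [dotProduct] using this
  have a2 : W₂ *ᵥ (fun z => Real.sqrt (PZ z)) = fun x => Real.sqrt (PX x) := by
    have : diagonal (fun z => Real.sqrt (PZ z)) *ᵥ (fun z => Real.sqrt (PZ z)) = PZ := by
      ext z; simp [mulVec_diagonal, Real.mul_self_sqrt (hPZpos z).le]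
    rw [hW₂, ← mulVec_mulVec, ← mulVec_mulVec, this, hXinv]
    ext x
    rw [mulVec_diagonal, inv_mul_eq_iff_eq_mul₀ (hsX x), Real.mul_self_sqrt (hPXpos x).le]
  have a1 : W₁ *ᵥ (fun z => Real.sqrt (PX z)) = fun x => Real.sqrt (PY x) := by
    have : diagonal (fun z => Real.sqrt (PX z)) *ᵥ (fun z => Real.sqrt (PX z)) = PX := by
      ext z; simp [mulVec_diagonal, Real.mul_self_sqrt (hPXpos z).le]
    rw [hW₁, ← mulVec_mulVec, ← mulVec_mulVec, this, ← hPY]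
    ext x
    rw [mulVec_diagonal, inv_mul_eq_iff_eq_mul₀ (hsY x), Real.mul_self_sqrt (hPYpos x).le]
  have b1 : (fun z => Real.sqrt (PY z)) ᵥ* W₁ = fun x => Real.sqrt (PX x) := by
    have : (fun z => Real.sqrt (PY z)) ᵥ* diagonal (fun y => (Real.sqrt (PY y))⁻¹)
        = fun _ => 1 := by
      ext z; simp [vecMul_diagonal, hsY z]
    rw [hW₁, ← vecMul_vecMul, ← vecMul_vecMul, this, oneYX]
    ext x; simp [vecMul_diagonal]
  have b2 : (fun z => Real.sqrt (PX z)) ᵥ* W₂ = fun x => Real.sqrt (PZ x) := by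
    have : (fun z => Real.sqrt (PX z)) ᵥ* diagonal (fun y => (Real.sqrt (PX y))⁻¹)
        = fun _ => 1 := by
      ext z; simp [vecMul_diagonal, hsX z]
    rw [hW₂, ← vecMul_vecMul, ← vecMul_vecMul, this, oneInv]
    ext x; simp [vecMul_diagonal]
  obtain ⟨⟨v, hv, hm⟩, hub⟩ := matOpNorm_greatest' (W₁ * W₂)
  have key := core' (W₁ * W₂) (fun z => Real.sqrt (PZ z)) (fun z => Real.sqrt (PY z))
    (by rw [← mulVec_mulVec, a2, a1]) (by rw [← vecMul_vecMul, b1, b2])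
    (by simp only [dotProduct, Real.mul_self_sqrt (hPZpos _).le]; exact hZsum) hgt v hv hm
  refine ⟨⟨v, hv, key, by rw [← hm]⟩, ?_⟩
  rintro r ⟨L, hL, -, rfl⟩
  exact pow_le_pow_left₀ (euclNorm_nonneg' _) (hub ⟨L, hL, rfl⟩) 2
end

section
/- Assume the main setup: 𝒳, 𝒴 finite of equal cardinality K, P_{X|Y} an invertible column-stochastic matrix, P_Y a positive probability vector, P_X = P_{X|Y} ⬝ P_Y positive, and W = [√P_Y⁻¹] ⬝ P_{X|Y}⁻¹ ⬝ [√P_X]. Let L* be a unit vector in ℝ^𝒳 with ⟨L*, √P_X⟩ = 0 and ‖W ⬝ L*‖ = ‖W‖ (it exists). For ε ∈ ℝ define the binary uniform mechanism P_{Y|U=0} = P_Y + ε·P_{X|Y}⁻¹ ⬝ [√P_X] ⬝ L*, P_{Y|U=1} = P_Y − ε·P_{X|Y}⁻¹ ⬝ [√P_X] ⬝ L*, with P_U(0) = P_U(1) = 1/2. Then: (i) the induced conditionals P_{X|U=u} = P_{X|Y} ⬝ P_{Y|U=u} satisfy P_{X|U=0} = P_X + ε·[√P_X] ⬝ L* and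 P_{X|U=1} = P_X − ε·[√P_X] ⬝ L*, and χ²(P_{X|U=u} ‖ P_X) = ε² for u = 0, 1, so the strong χ²-privacy criterion with leakage level ε holds; (ii) the function I(ε) = ∑_{u∈{0,1}} (1/2) · ∑_y P_{Y|U=u}(y) · log(P_{Y|U=u}(y)/P_Y(y)) satisfies I(ε) − (ε²/2)·‖W‖² = o(ε²) as ε → 0. -/
open Matrix Filter Asymptotics

theorem aux_log : (fun t : ℝ => (1+t) * Real.log (1+t) + (1-t) * Real.log (1-t) - t^2) =o[nhds 0]
    (fun t : ℝ => t^2) := by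
  have h1 : HasDerivAt (fun s : ℝ => Real.log (1 - s)) (-1) 0 := by
    have := ((hasDerivAt_id (0:ℝ)).const_sub 1).log (by simp)
    simpa using this
  have h2 : HasDerivAt (fun s : ℝ => Real.log (1 + s) - Real.log (1 - s)) 2 0 := by
    have := ((hasDerivAt_id (0:ℝ)).const_add 1).log (by simp)
    have h3 := this.sub h1
    have e : (1 / (1 + id 0) - -1 : ℝ) = 2 := by norm_num
    rw [e] at h3
    exact h3
  have o1 := h1.isLittleO
  have o2 := h2.isLittleO
  simp only [sub_zero, Real.log_one, add_zero, smul_eq_mul] at o1 o2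
  have ht : Tendsto (fun t : ℝ => t^2) (nhds 0) (nhds 0) := by
    have : Continuous (fun t : ℝ => t^2) := by fun_prop
    simpa using this.tendsto 0
  have o1' := o1.comp_tendsto ht
  have o2' := (isBigO_refl (fun t : ℝ => t) (nhds 0)).mul_isLittleO o2
  have o3 := o1'.add (o2'.congr_right (g₂ := (fun t : ℝ => t) |> fun _ => (fun s : ℝ => s) ∘ fun t : ℝ => t^2) (by intro t; simp; ring))
  refine o3.congr' ?_ (by filter_upwards with t; simp)
  filter_upwards [Ioo_mem_nhds (show (-1:ℝ) < 0 by norm_num) (show (0:ℝ) < 1 by norm_num)] with t ht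
  have : Real.log (1 - t^2) = Real.log (1+t) + Real.log (1-t) := by
    rw [← Real.log_mul (by linarith [ht.1]) (by linarith [ht.2])]
    ring_nf
  simp only [Function.comp, this]
  ring

theorem stmt_18 {𝒳 𝒴 : Type*} [Fintype 𝒳] [Fintype 𝒴] [DecidableEq 𝒳] [DecidableEq 𝒴]
    (hcard : Fintype.card 𝒳 = Fintype.card 𝒴)
    (PXY : Matrix 𝒳 𝒴 ℝ) (hPXY : ColStochastic PXY)
    (PXYinv : Matrix 𝒴 𝒳 ℝ) (hinv1 : PXY * PXYinv = 1) (hinv2 : PXYinv * PXY = 1)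
    (PY : 𝒴 → ℝ) (hPYpos : ∀ y, 0 < PY y) (hPYsum : ∑ y, PY y = 1)
    (PX : 𝒳 → ℝ) (hPX : PX = PXY.mulVec PY) (hPXpos : ∀ x, 0 < PX x)
    (W : Matrix 𝒴 𝒳 ℝ)
    (hW : W = diagonal (fun y => (Real.sqrt (PY y))⁻¹) * PXYinv *
      diagonal (fun x => Real.sqrt (PX x)))
    (Lstar : 𝒳 → ℝ) (hL1 : euclNorm Lstar = 1)
    (hL2 : (∑ x, Lstar x * Real.sqrt (PX x)) = 0)
    (hL3 : euclNorm (W.mulVec Lstar) = matOpNorm W)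
    (PYgU : ℝ → Fin 2 → 𝒴 → ℝ)
    (hPYgU0 : ∀ ε, PYgU ε 0 = fun y =>
      PY y + ε * PXYinv.mulVec ((diagonal fun x => Real.sqrt (PX x)).mulVec Lstar) y)
    (hPYgU1 : ∀ ε, PYgU ε 1 = fun y =>
      PY y - ε * PXYinv.mulVec ((diagonal fun x => Real.sqrt (PX x)).mulVec Lstar) y)
    (PXgU : ℝ → Fin 2 → 𝒳 → ℝ) (hPXgU : ∀ ε u, PXgU ε u = PXY.mulVec (PYgU ε u))
    (I : ℝ → ℝ)
    (hI : ∀ ε, I ε = ∑ u : Fin 2, (1/2 : ℝ) *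
      ∑ y, PYgU ε u y * Real.log (PYgU ε u y / PY y)) :
    -- (i) induced conditionals on X and exact χ²-leakage ε²
    (∀ ε : ℝ,
      PXgU ε 0 = (fun x => PX x + ε * (diagonal fun x => Real.sqrt (PX x)).mulVec Lstar x) ∧
      PXgU ε 1 = (fun x => PX x - ε * (diagonal fun x => Real.sqrt (PX x)).mulVec Lstar x) ∧
      ∀ u : Fin 2, ∑ x, (PXgU ε u x - PX x) ^ 2 / PX x = ε ^ 2)
    ∧
    -- (ii) the utility is (ε²/2)·‖W‖² up to o(ε²)
    (fun ε => I ε - ε ^ 2 / 2 * matOpNorm W ^ 2) =o[nhds 0] (fun ε => ε ^ 2) := by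
  have hdiag : ∀ x, (diagonal fun x => Real.sqrt (PX x)).mulVec Lstar x = Real.sqrt (PX x) * Lstar x := by
    intro x
    simp [mulVec_diagonal]
  have hLs : ∑ x, Lstar x ^ 2 = 1 := by
    have := hL1
    unfold euclNorm at this
    rwa [Real.sqrt_eq_one] at this
  have hback : PXY.mulVec (PXYinv.mulVec ((diagonal fun x => Real.sqrt (PX x)).mulVec Lstar))
      = (diagonal fun x => Real.sqrt (PX x)).mulVec Lstar := by
    rw [mulVec_mulVec, hinv1, one_mulVec]
  have hchi : ∀ ε : ℝ, ∑ x, (ε * (Real.sqrt (PX x) * Lstar x)) ^ 2 / PX x = ε ^ 2 := by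
    intro ε
    calc _ = ∑ x, ε ^ 2 * Lstar x ^ 2 := by
          refine Finset.sum_congr rfl fun x _ => ?_
          rw [mul_pow, mul_pow, Real.sq_sqrt (hPXpos x).le]
          have := (hPXpos x).ne'
          field_simp
      _ = ε ^ 2 := by rw [← Finset.mul_sum, hLs, mul_one]
  have hX0 : ∀ ε, PXgU ε 0 = (fun x => PX x + ε * (diagonal fun x => Real.sqrt (PX x)).mulVec Lstar x) := by
    intro ε
    have e : PYgU ε 0 = PY + ε • PXYinv.mulVec ((diagonal fun x => Real.sqrt (PX x)).mulVec Lstar) := by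
      rw [hPYgU0]; rfl
    rw [hPXgU, e, mulVec_add, mulVec_smul, hback, ← hPX]
    rfl
  have hX1 : ∀ ε, PXgU ε 1 = (fun x => PX x - ε * (diagonal fun x => Real.sqrt (PX x)).mulVec Lstar x) := by
    intro ε
    have e : PYgU ε 1 = PY - ε • PXYinv.mulVec ((diagonal fun x => Real.sqrt (PX x)).mulVec Lstar) := by
      rw [hPYgU1]; rfl
    rw [hPXgU, e, mulVec_sub, mulVec_smul, hback, ← hPX]
    rfl
  refine ⟨fun ε => ⟨hX0 ε, hX1 ε, ?_⟩, ?_⟩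
  · intro u
    fin_cases u
    · simp only [Fin.zero_eta, hX0, hdiag, add_sub_cancel_left]
      exact hchi ε
    · simp only [Fin.mk_one, hX1, hdiag, sub_sub_cancel_left, neg_sq]
      exact hchi ε
  · set d := PXYinv.mulVec ((diagonal fun x => Real.sqrt (PX x)).mulVec Lstar) with hd
    have hWn : matOpNorm W ^ 2 = ∑ y, d y ^ 2 / PY y := by
      rw [← hL3, euclNorm, Real.sq_sqrt (Finset.sum_nonneg fun _ _ => sq_nonneg _)]
      refine Finset.sum_congr rfl fun y _ => ?_
      have : W.mulVec Lstar = (diagonal (fun y => (Real.sqrt (PY y))⁻¹)).mulVec d := by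
        rw [hW, hd, mulVec_mulVec, mulVec_mulVec, Matrix.mul_assoc]
      rw [this, mulVec_diagonal, mul_pow, inv_pow, Real.sq_sqrt (hPYpos y).le]
      ring
    have key : ∀ y, (fun ε : ℝ => PY y / 2 * ((1+ε * (d y / PY y)) * Real.log (1+ε * (d y / PY y))
        + (1-ε * (d y / PY y)) * Real.log (1-ε * (d y / PY y)) - (ε * (d y / PY y))^2)) =o[nhds 0]
        (fun ε : ℝ => ε^2) := by
      intro y
      refine IsLittleO.const_mul_left ?_ _
      have ht : Tendsto (fun ε : ℝ => ε * (d y / PY y)) (nhds 0) (nhds 0) := by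
        have : Continuous (fun ε : ℝ => ε * (d y / PY y)) := by fun_prop
        simpa using this.tendsto 0
      refine (aux_log.comp_tendsto ht).trans_isBigO ?_
      refine IsBigO.of_bound ((d y / PY y)^2) (Eventually.of_forall fun ε => ?_)
      simp only [Function.comp, mul_pow, norm_mul, norm_pow]
      rw [mul_comm, Real.norm_eq_abs (d y / PY y), sq_abs]
    have hs := IsLittleO.sum (s := Finset.univ) fun y _ => key y
    refine hs.congr_left ?_
    intro ε
    try rw [Finset.sum_apply]
    symm
    rw [hI, hWn, Fin.sum_univ_two, hPYgU0, hPYgU1, Finset.mul_sum, Finset.mul_sum, Finset.mul_sum,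
      ← Finset.sum_add_distrib, ← Finset.sum_sub_distrib]
    refine Finset.sum_congr rfl fun y _ => ?_
    have hp := (hPYpos y).ne'
    have e1 : (PY y + ε * d y) / PY y = 1 + ε * (d y / PY y) := by field_simp
    have e2 : (PY y - ε * d y) / PY y = 1 - ε * (d y / PY y) := by field_simp
    simp only [e1, e2]
    generalize Real.log (1 + ε * (d y / PY y)) = a
    generalize Real.log (1 - ε * (d y / PY y)) = b
    field_simp
end
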